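/- Let f be a cellular automaton on A^ℤ and let X ⊆ A^ℤ be a σ±-chain transitive subshift. Then the image f(X) is a σ±-chain transitive subshift. -/

import Mathlib

open Filter Set Function

namespace Gls

variable {A : Type*}

/-- The left shift map on `A^ℤ`. -/
def shift (x : ℤ → A) : ℤ → A := fun i => x (i + 1)

/-- A cellular automaton: a continuous shift-commuting self-map of the full shift. -/
def IsCA [TopologicalSpace A] (f : (ℤ → A) → (ℤ → A)) : Prop :=
  Continuous f ∧ f ∘ shift = shift ∘ f

/-- The set of limit points of the forward orbit of `x` under `f`. -/
def omegaSet [TopologicalSpace A] (f : (ℤ → A) → (ℤ → A)) (x : ℤ → A) : Set (ℤ → A) :=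
  {y | MapClusterPt y atTop fun t => f^[t] x}

/-- The realm of attraction of `Y`. -/
def realm [TopologicalSpace A] (f : (ℤ → A) → (ℤ → A)) (Y : Set (ℤ → A)) : Set (ℤ → A) :=
  {x | omegaSet f x ⊆ Y}

/-- The generic limit set: the intersection of all closed sets whose realm is comeager. -/
def genLimitSet [TopologicalSpace A] (f : (ℤ → A) → (ℤ → A)) : Set (ℤ → A) :=
  ⋂₀ {C | IsClosed C ∧ realm f C ∈ residual (ℤ → A)}

/-- The word `x_{[i, i+n)}` of length `n` read in the configuration `x` from position `i`. -/
def word (x : ℤ → A) (i : ℤ) (n : ℕ) : List A :=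
  (List.range n).map fun k => x (i + k)

/-- The cylinder set `[w]_i`. -/
def cylinder (w : List A) (i : ℤ) : Set (ℤ → A) := {x | word x i w.length = w}

/-- The language of `X`: all finite words occurring in points of `X`. -/
def lang (X : Set (ℤ → A)) : Set (List A) :=
  {w | ∃ x ∈ X, ∃ i : ℤ, word x i w.length = w}


/-- A subshift: a closed shift-invariant set. -/
def IsSubshift {A : Type*} [TopologicalSpace A] (X : Set (ℤ → A)) : Prop :=
  IsClosed X ∧ shift '' X = X

/-- The chain relation: `u ∼ v` iff they have the same length `n` and there are `x ∈ X`
and `k ≥ 0` with `x_{[0,n)} = u` and `x_{[k,k+n)} = v`. -/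
def chainRel {A : Type*} (X : Set (ℤ → A)) (u v : List A) : Prop :=
  u.length = v.length ∧ ∃ x ∈ X, ∃ k : ℕ,
    word x 0 u.length = u ∧ word x (k : ℤ) u.length = v

/-- `X` is `σ±`-chain transitive if for every `n`, the symmetric-transitive closure of the
width-`n` chain relation relates every pair of words in `L_n(X)`. -/
def ChainTransPM {A : Type*} (X : Set (ℤ → A)) : Prop :=
  ∀ u ∈ lang X, ∀ v ∈ lang X, u.length = v.length → Relation.EqvGen (chainRel X) u v

/-- `Y` is a `σ±`-chain component of `X`: a maximal `σ±`-chain transitive subshift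
contained in `X`. -/
def IsChainComponent {A : Type*} [TopologicalSpace A] (X Y : Set (ℤ → A)) : Prop :=
  IsSubshift Y ∧ Y ⊆ X ∧ ChainTransPM Y ∧
    ∀ Z : Set (ℤ → A), IsSubshift Z → Z ⊆ X → ChainTransPM Z → Y ⊆ Z → Z = Y

theorem word_def' (x : ℤ → A) (i : ℤ) (n : ℕ) :
    word x i n = (List.range n).map fun k : ℕ => x (i + (k : ℤ)) := by
  unfold word
  simp [← List.map_eq_flatMap, Function.comp_def]

theorem word_eq_iff' (x y : ℤ → A) (i j : ℤ) (n : ℕ) :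
    word x i n = word y j n ↔ ∀ k < n, x (i + k) = y (j + k) := by
  simp [word_def', List.map_inj_left]

theorem word_length' (x : ℤ → A) (i : ℤ) (n : ℕ) : (word x i n).length = n := by
  simp [word]

def tr (k : ℤ) (x : ℤ → A) : ℤ → A := fun i => x (i + k)

theorem tr_zero (x : ℤ → A) : tr 0 x = x := by
  funext i; simp [tr]

theorem tr_shift (k : ℤ) (x : ℤ → A) : tr (k + 1) x = tr k (shift x) := by
  funext i; simp only [tr, shift]; congr 1; ring

theorem shift_inj {x y : ℤ → A} (h : shift x = shift y) : x = y := by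
  funext i
  have := congrFun h (i - 1)
  simpa [shift] using this

theorem shift_tr (k : ℤ) (x : ℤ → A) : shift (tr k x) = tr (k + 1) x := by
  funext i; simp only [tr, shift]; congr 1; ring

theorem ca_tr [TopologicalSpace A] (f : (ℤ → A) → (ℤ → A)) (hf : IsCA f) (k : ℤ) (x : ℤ → A) :
    f (tr k x) = tr k (f x) := by
  have hs : ∀ x, f (shift x) = shift (f x) := fun x => congrFun hf.2 x
  induction k using Int.induction_on with
  | zero => simp [tr_zero]
  | succ k ih => rw [← shift_tr, hs, ih, shift_tr]
  | pred k ih =>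
    apply shift_inj
    rw [← hs, shift_tr, shift_tr]
    simpa using ih

theorem ca_local [Fintype A] [TopologicalSpace A] [DiscreteTopology A]
    (f : (ℤ → A) → (ℤ → A)) (hf : IsCA f) :
    ∃ r : ℕ, ∀ x y : ℤ → A, (∀ i : ℤ, i.natAbs ≤ r → x i = y i) → f x 0 = f y 0 := by
  classical
  have h1 : ∀ x : ℤ → A, ∃ I : Finset ℤ, ∀ y, (∀ i ∈ I, y i = x i) → f y 0 = f x 0 := by
    intro x
    have ho : IsOpen {y | f y 0 = f x 0} := by
      have hc : Continuous fun y => f y 0 := (continuous_apply 0).comp hf.1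
      exact (isOpen_discrete {f x 0}).preimage hc
    obtain ⟨I, u, hu, hsub⟩ := isOpen_pi_iff.1 ho x rfl
    refine ⟨I, fun y hy => hsub ?_⟩
    intro i hi
    rw [hy i hi]
    exact (hu i hi).2
  choose I hI using h1
  obtain ⟨t, -, ht⟩ := (isCompact_univ (X := ℤ → A)).elim_nhds_subcover
    (fun x => {y | ∀ i ∈ I x, y i = x i}) (by
      intro x _
      have : IsOpen ((I x : Set ℤ).pi fun i => {x i}) :=
        isOpen_set_pi (I x).finite_toSet fun i _ => isOpen_discrete _
      exact this.mem_nhds (fun i _ => rfl))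
  refine ⟨(t.biUnion I).sup Int.natAbs, fun x y hxy => ?_⟩
  obtain ⟨z, hz, hxz⟩ := mem_iUnion₂.1 (ht (mem_univ x))
  rw [hI z x hxz, hI z y]
  intro i hi
  rw [← hxy i (Finset.le_sup (f := Int.natAbs) (Finset.mem_biUnion.2 ⟨z, hz, hi⟩))]
  exact hxz i hi

/-- the image of a `σ±`-chain transitive subshift under a cellular
automaton is a `σ±`-chain transitive subshift. -/
theorem stmt16 [Fintype A] [TopologicalSpace A] [DiscreteTopology A]
    (f : (ℤ → A) → (ℤ → A)) (hf : IsCA f) (X : Set (ℤ → A)) (hX : IsSubshift X)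
    (hct : ChainTransPM X) :
    IsSubshift (f '' X) ∧ ChainTransPM (f '' X) := by
  classical
  have hs : ∀ x, f (shift x) = shift (f x) := fun x => congrFun hf.2 x
  refine ⟨⟨(hX.1.isCompact.image hf.1).isClosed, ?_⟩, ?_⟩
  · conv_rhs => rw [← hX.2]
    rw [image_image, image_image]
    simp only [hs]
  have hXs : ∀ k : ℕ, ∀ x ∈ X, tr (k : ℤ) x ∈ X := by
    intro k
    induction k with
    | zero => intro x hx; simpa [tr_zero] using hx
    | succ k ih =>
      intro x hx
      push_cast
      rw [← shift_tr, ← hX.2]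
      exact mem_image_of_mem _ (ih x hx)
  obtain ⟨r, hr⟩ := ca_local f hf
  rintro u ⟨_, ⟨x, hx, rfl⟩, i, hu⟩ v ⟨_, ⟨y, hy, rfl⟩, j, hv⟩ huv
  rw [← huv] at hv
  generalize u.length = n at hu hv
  clear huv
  let F : List A → List A := fun w => word (f fun i => w.getD i.toNat (x 0)) r n
  have hF : ∀ (z : ℤ → A) (i : ℤ), word (f z) (i + r) n = F (word z i (n + 2 * r)) := by
    intro z i
    simp only [F]
    rw [word_eq_iff']
    intro k hk
    have e : ∀ (z : ℤ → A) (a : ℤ), f z a = f (tr a z) 0 := by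
      intro z a; rw [ca_tr f hf]; simp [tr]
    rw [e z, e _ ((r : ℤ) + k)]
    apply hr
    intro m hm
    have h2 : (m + (r + k)).toNat < n + 2 * r := by omega
    simp only [tr, word_def']
    rw [List.getD_eq_getElem _ _ (by simpa using h2)]
    simp only [List.getElem_map, List.getElem_range]
    congr 1
    omega
  have key : ∀ a b, Relation.EqvGen (chainRel X) a b → a.length = b.length ∧
      (a.length = n + 2 * r → Relation.EqvGen (chainRel (f '' X)) (F a) (F b)) := by
    intro a b h
    induction h with
    | rel a b h =>
      obtain ⟨hl, z, hz, k, ha, hb⟩ := h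
      refine ⟨hl, fun hn => .rel _ _ ?_⟩
      rw [hn] at ha hb
      have hlF : ∀ w, (F w).length = n := fun w => word_length' _ _ _
      refine ⟨by rw [hlF, hlF], f (tr r z), mem_image_of_mem _ (hXs r z hz), k, ?_, ?_⟩
      · rw [hlF, ← ha, ← hF, ca_tr f hf, word_eq_iff']
        intro m _
        simp only [tr]; congr 1; ring
      · rw [hlF, ← hb, ← hF, ca_tr f hf, word_eq_iff']
        intro m _
        simp only [tr]; congr 1; ring
    | refl a => exact ⟨rfl, fun _ => .refl _⟩
    | symm a b _ ih => exact ⟨ih.1.symm, fun h => .symm _ _ (ih.2 (ih.1.trans h))⟩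
    | trans a b c _ _ ih1 ih2 =>
      exact ⟨ih1.1.trans ih2.1, fun h => .trans _ _ _ (ih1.2 h) (ih2.2 (ih1.1 ▸ h))⟩
  have hu' := hF x (i - r)
  have hv' := hF y (j - r)
  rw [sub_add_cancel, hu] at hu'
  rw [sub_add_cancel, hv] at hv'
  rw [hu', hv']
  refine (key _ _ (hct _ ⟨x, hx, i - r, ?_⟩ _ ⟨y, hy, j - r, ?_⟩ ?_)).2 ?_ <;>
    simp only [word_length']

end Gls
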